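/- arXiv:2404.12219 — 2 statements merged into one kernel-verified Lean document; each statement's English description precedes it below -/
import Mathlib

section
/- Let H be a real Hilbert space, X a set, Φ : X → H a feature map, and P the orthogonal projection of H onto a finite-dimensional subspace V ⊆ H, giving the Nyström-approximated kernel C̃(x,y) = ⟨PΦ(x), PΦ(y)⟩. Let π̃ be the discrete probability measure given by points y_1,…,y_N ∈ X with nonnegative weights u_1,…,u_N summing to 1, and let the quadrature rule π_KQ be given by points x_1,…,x_n ∈ X with nonnegative weights w_1,…,w_n summing to 1. Assume (i) exactness on all test functions induced by V: Σ_{i=1}^n w_i P(Φ(x_i)) = Σ_{j=1}^N u_j P(Φ(y_j)); and (ii) Σ_{i=1}^n w_i ‖Φ(x_i) − PΦ(x_i)‖ ≤ Σ_{j=1}^N u_j ‖Φ(y_j) − PΦ(y_j)‖. Then for every μ ∈ H (the mean embedding of a target measure π), ‖Σ_{i=1}^n w_i Φ(x_i) − μ‖ ≤ ‖Σ_{i=1}^n w_i Φ(x_i) − Σ_{j=1}^N u_j Φ(y_j)‖ + ‖Σ_{j=1}^N u_j Φ(y_j) − μ‖ ≤ 2 Σ_{j=1}^N u_j ‖Φ(y_j)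 − PΦ(y_j)‖ + ‖Σ_{j=1}^N u_j Φ(y_j) − μ‖. (Here ‖Φ(y) − PΦ(y)‖ = √((C − C̃)(y,y)), so the first term is twice the π̃-integral of √(C − C̃), the Nyström approximation error, and the second term is the MMD between the empirical measure π̃ and the target, so the worst-case quadrature error of π_KQ against the target is bounded by the Nyström error plus the empirical-measure error.) -/
open scoped RealInnerProductSpace BigOperators

/-! Let `Ψ` be an approximation of the feature map `Φ` that both quadrature rules integrate to the
same vector. Subtracting this common vector turns the difference of the mean embeddings of `Φ` into
the difference of those of the residual `Φ - Ψ`. Each of these two has norm at most the integral of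
`‖Φ - Ψ‖`, and the integral for the rule `(w, x)` is at most the one for `(u, y)`: hence the
factor `2`. The feature map of the Nyström kernel is `Ψ = P ∘ Φ`. -/

section WeightedSums

variable {ι κ : Type*} {s : Finset ι} {t : Finset κ}

theorem sum_smul_sub_sum_smul_eq_of_sum_smul_eq {R M : Type*} [AddCommGroup M]
    [DistribSMul R M] {w : ι → R} {u : κ → R} {f f' : ι → M} {g g' : κ → M}
    (h : ∑ i ∈ s, w i • f' i = ∑ j ∈ t, u j • g' j) :
    ∑ i ∈ s, w i • f i - ∑ j ∈ t, u j • g j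
      = ∑ i ∈ s, w i • (f i - f' i) - ∑ j ∈ t, u j • (g j - g' j) := by
  simp only [smul_sub, Finset.sum_sub_distrib, h, sub_sub_sub_cancel_right]

variable {E : Type*} [SeminormedAddCommGroup E] [NormedSpace ℝ E] {w : ι → ℝ} {u : κ → ℝ}

theorem norm_sum_smul_le_sum_mul_norm (hw : ∀ i ∈ s, 0 ≤ w i) (f : ι → E) :
    ‖∑ i ∈ s, w i • f i‖ ≤ ∑ i ∈ s, w i * ‖f i‖ :=
  norm_sum_le_of_le s fun i hi => (norm_smul_of_nonneg (hw i hi) (f i)).le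

theorem norm_sum_smul_sub_sum_smul_le_of_sum_smul_eq {f f' : ι → E} {g g' : κ → E}
    (hw : ∀ i ∈ s, 0 ≤ w i) (hu : ∀ j ∈ t, 0 ≤ u j)
    (h : ∑ i ∈ s, w i • f' i = ∑ j ∈ t, u j • g' j) :
    ‖∑ i ∈ s, w i • f i - ∑ j ∈ t, u j • g j‖
      ≤ ∑ i ∈ s, w i * ‖f i - f' i‖ + ∑ j ∈ t, u j * ‖g j - g' j‖ := by
  rw [sum_smul_sub_sum_smul_eq_of_sum_smul_eq h]
  exact norm_sub_le_of_le (norm_sum_smul_le_sum_mul_norm hw _) (norm_sum_smul_le_sum_mul_norm hu _)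

theorem stmt_0_general {X : Type*} (Φ Ψ : X → E) (x : ι → X) (y : κ → X)
    (hw : ∀ i ∈ s, 0 ≤ w i) (hu : ∀ j ∈ t, 0 ≤ u j)
    (hexact : ∑ i ∈ s, w i • Ψ (x i) = ∑ j ∈ t, u j • Ψ (y j))
    (hres : ∑ i ∈ s, w i * ‖Φ (x i) - Ψ (x i)‖ ≤ ∑ j ∈ t, u j * ‖Φ (y j) - Ψ (y j)‖) (μ : E) :
    ‖∑ i ∈ s, w i • Φ (x i) - μ‖
        ≤ ‖∑ i ∈ s, w i • Φ (x i) - ∑ j ∈ t, u j • Φ (y j)‖ + ‖∑ j ∈ t, u j • Φ (y j) - μ‖ ∧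
      ‖∑ i ∈ s, w i • Φ (x i) - ∑ j ∈ t, u j • Φ (y j)‖ + ‖∑ j ∈ t, u j • Φ (y j) - μ‖
        ≤ 2 * ∑ j ∈ t, u j * ‖Φ (y j) - Ψ (y j)‖ + ‖∑ j ∈ t, u j • Φ (y j) - μ‖ := by
  refine ⟨norm_sub_le_norm_sub_add_norm_sub _ _ _, ?_⟩
  gcongr
  calc ‖∑ i ∈ s, w i • Φ (x i) - ∑ j ∈ t, u j • Φ (y j)‖
      ≤ ∑ i ∈ s, w i * ‖Φ (x i) - Ψ (x i)‖ + ∑ j ∈ t, u j * ‖Φ (y j) - Ψ (y j)‖ :=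
        norm_sum_smul_sub_sum_smul_le_of_sum_smul_eq hw hu hexact
    _ ≤ ∑ j ∈ t, u j * ‖Φ (y j) - Ψ (y j)‖ + ∑ j ∈ t, u j * ‖Φ (y j) - Ψ (y j)‖ := by gcongr
    _ = 2 * ∑ j ∈ t, u j * ‖Φ (y j) - Ψ (y j)‖ := (two_mul _).symm

end WeightedSums

/-- Nyström + empirical-measure bound on the worst-case quadrature error.
`Φ : X → H` is a feature map, `V` a finite-dimensional subspace of `H` with orthogonal
projection `P`, the quadrature rule `π_KQ = (w, x)` and the empirical measure `π̃ = (u, y)`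
are discrete probability measures.  If the rule is exact on the test functions induced by `V`
and does not increase the integral of the Nyström residual `‖Φ(·) − PΦ(·)‖`, then for any
target mean embedding `μ ∈ H` the quadrature error is bounded by twice the Nyström
approximation error plus the empirical-measure MMD. -/
theorem stmt_0
    {H : Type*} [NormedAddCommGroup H] [InnerProductSpace ℝ H]
    {X : Type*} (Φ : X → H)
    (V : Submodule ℝ H) [FiniteDimensional ℝ V]
    {n N : ℕ} (x : Fin n → X) (w : Fin n → ℝ) (y : Fin N → X) (u : Fin N → ℝ)
    (hw : ∀ i, 0 ≤ w i) (hw1 : ∑ i, w i = 1)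
    (hu : ∀ j, 0 ≤ u j) (hu1 : ∑ j, u j = 1)
    (hexact : ∑ i, w i • (Submodule.orthogonalProjectionOnto V (Φ (x i)) : H)
      = ∑ j, u j • (Submodule.orthogonalProjectionOnto V (Φ (y j)) : H))
    (hres : ∑ i, w i * ‖Φ (x i) - (Submodule.orthogonalProjectionOnto V (Φ (x i)) : H)‖
      ≤ ∑ j, u j * ‖Φ (y j) - (Submodule.orthogonalProjectionOnto V (Φ (y j)) : H)‖) :
    ∀ μ : H,
      ‖(∑ i, w i • Φ (x i)) - μ‖
        ≤ ‖(∑ i, w i • Φ (x i)) - ∑ j, u j • Φ (y j)‖ + ‖(∑ j, u j • Φ (y j)) - μ‖ ∧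
      ‖(∑ i, w i • Φ (x i)) - ∑ j, u j • Φ (y j)‖ + ‖(∑ j, u j • Φ (y j)) - μ‖
        ≤ 2 * (∑ j, u j * ‖Φ (y j) - (Submodule.orthogonalProjectionOnto V (Φ (y j)) : H)‖)
          + ‖(∑ j, u j • Φ (y j)) - μ‖ := by
  exact stmt_0_general Φ (fun z => (V.orthogonalProjectionOnto (Φ z) : H)) x y
    (fun i _ => hw i) (fun j _ => hu j) hexact hres
end

section
/- Let H be a real Hilbert space, X a set, Φ : X → H a feature map with kernel C(x,y) = ⟨Φ(x), Φ(y)⟩, and P the orthogonal projection of H onto a finite-dimensional subspace V ⊆ H. Let x_1,…,x_N ∈ X, let w^N and w* be nonnegative weight vectors in ℝ^N each summing to 1, and let q_1,…,q_N ∈ [0,1], with Z_1,…,Z_N independent Bernoulli random variables, P(Z_i = 1) = q_i. Set K_max := max_i ‖Φ(x_i)‖, ε_nys := max_i ‖Φ(x_i) − PΦ(x_i)‖, and ε_vio := 1 − Σ_i w^N_i q_i. Assume (i) Σ_i w*_i q_i ≥ Σ_i w^N_i q_i, and (ii) ‖Σ_i (w*_i − w^N_i) PΦ(x_i)‖ ≤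 ε_LP for some ε_LP ≥ 0. Then for every g ∈ H, the RKHS function f(x) = ⟨g, Φ(x)⟩ satisfies E[ | Σ_{i=1}^N Z_i w*_i f(x_i) − Σ_{i=1}^N w^N_i f(x_i) | ] ≤ (ε_vio · K_max + 2 ε_nys + ε_LP) · ‖g‖. -/
open MeasureTheory ProbabilityTheory
open scoped RealInnerProductSpace

/-!
Pointwise, the thinned weights `Z i * w i` differ from `w i` by `(1 - Z i) * w i`, so thinning costs
at most `K` times the lost mass, whose mean is `∑ i, w i * (1 - q i)` by linearity of expectation;
the feasibility inequality bounds this by the violation rate of the reference weights `v`.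
Replacing `w` by `v` is a deterministic error: with `ψ` approximating the embedding `φ` up to `ε`,
the residuals `φ i - ψ i` contribute at most `(∑ i, w i + ∑ i, v i) * ε = 2 * ε`, and the
approximate embeddings `ψ i` at most the quadrature tolerance.
-/

section WeightedSums

variable {ι E : Type*} [SeminormedAddCommGroup E] [NormedSpace ℝ E] {s : Finset ι}

lemma norm_sum_sub_smul_le {v w : ι → ℝ} (hv : ∀ i ∈ s, 0 ≤ v i) (hw : ∀ i ∈ s, 0 ≤ w i)
    {r : ι → E} {ε : ℝ} (hr : ∀ i ∈ s, ‖r i‖ ≤ ε) :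
    ‖∑ i ∈ s, (w i - v i) • r i‖ ≤ (∑ i ∈ s, w i + ∑ i ∈ s, v i) * ε := by
  rw [← Finset.sum_add_distrib, Finset.sum_mul]
  refine norm_sum_le_of_le s fun i hi => ?_
  have habs : |w i - v i| ≤ w i + v i := by
    simpa only [abs_of_nonneg (hw i hi), abs_of_nonneg (hv i hi)] using abs_sub (w i) (v i)
  rw [norm_smul, Real.norm_eq_abs]
  exact mul_le_mul habs (hr i hi) (norm_nonneg _) (add_nonneg (hw i hi) (hv i hi))

lemma norm_sum_sub_smul_le_of_norm_sub_le {v w : ι → ℝ} (hv : ∀ i ∈ s, 0 ≤ v i)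
    (hw : ∀ i ∈ s, 0 ≤ w i) {φ ψ : ι → E} {ε : ℝ} (hφψ : ∀ i ∈ s, ‖φ i - ψ i‖ ≤ ε) :
    ‖∑ i ∈ s, (w i - v i) • φ i‖
      ≤ (∑ i ∈ s, w i + ∑ i ∈ s, v i) * ε + ‖∑ i ∈ s, (w i - v i) • ψ i‖ := by
  have hsplit : ∑ i ∈ s, (w i - v i) • φ i
      = ∑ i ∈ s, (w i - v i) • (φ i - ψ i) + ∑ i ∈ s, (w i - v i) • ψ i := by
    simp only [← Finset.sum_add_distrib, ← smul_add, sub_add_cancel]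
  rw [hsplit]
  exact norm_add_le_of_le (norm_sum_sub_smul_le hv hw hφψ) le_rfl

lemma norm_sum_thinned_sub_le {z v w : ι → ℝ} (hz : ∀ i ∈ s, z i ≤ 1) (hw : ∀ i ∈ s, 0 ≤ w i)
    {φ : ι → E} {K : ℝ} (hφ : ∀ i ∈ s, ‖φ i‖ ≤ K) :
    ‖∑ i ∈ s, (z i * w i) • φ i - ∑ i ∈ s, v i • φ i‖
      ≤ (∑ i ∈ s, w i * (1 - z i)) * K + ‖∑ i ∈ s, (w i - v i) • φ i‖ := by
  have hsplit : ∑ i ∈ s, (z i * w i) • φ i - ∑ i ∈ s, v i • φ i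
      = ∑ i ∈ s, (w i - v i) • φ i - ∑ i ∈ s, (w i * (1 - z i)) • φ i := by
    simp only [← Finset.sum_sub_distrib, ← sub_smul]
    exact Finset.sum_congr rfl fun i _ => by ring_nf
  have hlost : ‖∑ i ∈ s, (w i * (1 - z i)) • φ i‖ ≤ (∑ i ∈ s, w i * (1 - z i)) * K := by
    rw [Finset.sum_mul]
    refine norm_sum_le_of_le s fun i hi => ?_
    have hmass : 0 ≤ w i * (1 - z i) := mul_nonneg (hw i hi) (sub_nonneg.2 (hz i hi))
    rw [norm_smul, Real.norm_of_nonneg hmass]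
    exact mul_le_mul_of_nonneg_left (hφ i hi) hmass
  rw [hsplit, add_comm]
  exact norm_sub_le_of_le le_rfl hlost

end WeightedSums

section RandomThinning

variable {ι Ω : Type*} [MeasurableSpace Ω] {μ : Measure Ω} {s : Finset ι}

lemma integrable_of_eq_zero_or_one [IsFiniteMeasure μ] {Y : Ω → ℝ} (hY : AEMeasurable Y μ)
    (hY01 : ∀ᵐ ω ∂μ, Y ω = 0 ∨ Y ω = 1) : Integrable Y μ :=
  Integrable.of_bound hY.aestronglyMeasurable 1 <|
    hY01.mono fun ω hω => by rcases hω with h | h <;> simp [h]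

lemma integral_eq_measureReal_of_eq_zero_or_one {Y : Ω → ℝ} (hY : AEMeasurable Y μ)
    (hY01 : ∀ᵐ ω ∂μ, Y ω = 0 ∨ Y ω = 1) : ∫ ω, Y ω ∂μ = μ.real {ω | Y ω = 1} := by
  have hset : NullMeasurableSet {ω | Y ω = 1} μ :=
    hY.nullMeasurableSet_preimage (measurableSet_singleton 1)
  have hindicator : Y =ᵐ[μ] {ω | Y ω = 1}.indicator fun _ => 1 :=
    hY01.mono fun ω hω => by rcases hω with h | h <;> simp [Set.indicator, h]
  rw [integral_congr_ae hindicator, integral_indicator₀ hset, setIntegral_const, smul_eq_mul,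
    mul_one]

variable {Z : ι → Ω → ℝ}

lemma integrable_sum_mul_one_sub [IsFiniteMeasure μ] (hZ : ∀ i ∈ s, Integrable (Z i) μ)
    (w : ι → ℝ) : Integrable (fun ω => ∑ i ∈ s, w i * (1 - Z i ω)) μ :=
  integrable_finsetSum s fun i hi => ((integrable_const 1).sub (hZ i hi)).const_mul (w i)

variable [IsProbabilityMeasure μ]

lemma integral_sum_mul_one_sub (hZ : ∀ i ∈ s, Integrable (Z i) μ) (w : ι → ℝ) :
    ∫ ω, ∑ i ∈ s, w i * (1 - Z i ω) ∂μ = ∑ i ∈ s, w i * (1 - ∫ ω, Z i ω ∂μ) := by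
  have hterm (i) (hi : i ∈ s) : Integrable (fun ω => w i * (1 - Z i ω)) μ :=
    ((integrable_const 1).sub (hZ i hi)).const_mul (w i)
  rw [integral_finsetSum s hterm]
  refine Finset.sum_congr rfl fun i hi => ?_
  rw [integral_const_mul, integral_sub (integrable_const 1) (hZ i hi), integral_const,
    probReal_univ, one_smul]

lemma integral_norm_sum_thinned_sub_le {E : Type*} [SeminormedAddCommGroup E] [NormedSpace ℝ E]
    (hZ : ∀ i ∈ s, Integrable (Z i) μ) (hZ1 : ∀ i ∈ s, ∀ᵐ ω ∂μ, Z i ω ≤ 1)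
    {w : ι → ℝ} (hw : ∀ i ∈ s, 0 ≤ w i) (v : ι → ℝ)
    {φ : ι → E} {K : ℝ} (hφ : ∀ i ∈ s, ‖φ i‖ ≤ K) :
    ∫ ω, ‖∑ i ∈ s, (Z i ω * w i) • φ i - ∑ i ∈ s, v i • φ i‖ ∂μ
      ≤ (∑ i ∈ s, w i * (1 - ∫ ω, Z i ω ∂μ)) * K + ‖∑ i ∈ s, (w i - v i) • φ i‖ := by
  have hlost : Integrable (fun ω => (∑ i ∈ s, w i * (1 - Z i ω)) * K) μ :=
    (integrable_sum_mul_one_sub hZ w).mul_const K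
  calc ∫ ω, ‖∑ i ∈ s, (Z i ω * w i) • φ i - ∑ i ∈ s, v i • φ i‖ ∂μ
      ≤ ∫ ω, ((∑ i ∈ s, w i * (1 - Z i ω)) * K + ‖∑ i ∈ s, (w i - v i) • φ i‖) ∂μ := by
        refine integral_mono_of_nonneg (ae_of_all _ fun _ => norm_nonneg _)
          (hlost.add (integrable_const _)) ?_
        filter_upwards [(Finset.eventually_all s).2 hZ1] with ω hω
        exact norm_sum_thinned_sub_le hω hw hφ
    _ = (∑ i ∈ s, w i * (1 - ∫ ω, Z i ω ∂μ)) * K + ‖∑ i ∈ s, (w i - v i) • φ i‖ := by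
        rw [integral_add hlost (integrable_const _), integral_mul_const,
          integral_sum_mul_one_sub hZ, integral_const, probReal_univ, one_smul]

end RandomThinning

/-- For `ℓ = id` the left-hand side is the expected distance between the thinned and the reference
mean embeddings. -/
theorem stmt_2_general
    {ι E F Ω : Type*} [Fintype ι] [SeminormedAddCommGroup E] [NormedSpace ℝ E]
    [SeminormedAddCommGroup F] [NormedSpace ℝ F]
    [MeasurableSpace Ω] {μ : Measure Ω} [IsProbabilityMeasure μ]
    {v w q : ι → ℝ} (hv : ∀ i, 0 ≤ v i) (hv1 : ∑ i, v i = 1)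
    (hw : ∀ i, 0 ≤ w i) (hw1 : ∑ i, w i = 1)
    {Z : ι → Ω → ℝ} (hZ : ∀ i, Integrable (Z i) μ) (hZ1 : ∀ i, ∀ᵐ ω ∂μ, Z i ω ≤ 1)
    (hZq : ∀ i, ∫ ω, Z i ω ∂μ = q i) (hfeas : ∑ i, v i * q i ≤ ∑ i, w i * q i)
    {φ ψ : ι → E} {K εnys εLP : ℝ} (hK : ∀ i, ‖φ i‖ ≤ K) (hεnys : ∀ i, ‖φ i - ψ i‖ ≤ εnys)
    (hLP : ‖∑ i, (w i - v i) • ψ i‖ ≤ εLP) (ℓ : E →L[ℝ] F) :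
    ∫ ω, ‖∑ i, (Z i ω * w i) • ℓ (φ i) - ∑ i, v i • ℓ (φ i)‖ ∂μ
      ≤ ((1 - ∑ i, v i * q i) * K + 2 * εnys + εLP) * ‖ℓ‖ := by
  have hK0 : 0 ≤ K := by
    obtain ⟨i, -, -⟩ := Finset.exists_ne_zero_of_sum_ne_zero (hw1.trans_ne one_ne_zero)
    exact (norm_nonneg _).trans (hK i)
  have hlost : ∑ i, w i * (1 - ∫ ω, Z i ω ∂μ) ≤ 1 - ∑ i, v i * q i := by
    simp only [hZq, mul_sub, mul_one, Finset.sum_sub_distrib, hw1]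
    exact sub_le_sub_left hfeas 1
  have hembed : ‖∑ i, (w i - v i) • φ i‖ ≤ 2 * εnys + εLP := by
    have h := norm_sum_sub_smul_le_of_norm_sub_le (fun i _ => hv i) (fun i _ => hw i)
      (fun i (_ : i ∈ Finset.univ) => hεnys i)
    rw [hw1, hv1] at h
    linarith
  have hquad : ‖∑ i, (w i - v i) • ℓ (φ i)‖ ≤ ‖ℓ‖ * (2 * εnys + εLP) := by
    simp only [← map_smul, ← map_sum]
    exact ℓ.le_opNorm_of_le hembed
  calc ∫ ω, ‖∑ i, (Z i ω * w i) • ℓ (φ i) - ∑ i, v i • ℓ (φ i)‖ ∂μ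
      ≤ (∑ i, w i * (1 - ∫ ω, Z i ω ∂μ)) * (‖ℓ‖ * K) + ‖∑ i, (w i - v i) • ℓ (φ i)‖ :=
        integral_norm_sum_thinned_sub_le (fun i _ => hZ i) (fun i _ => hZ1 i) (fun i _ => hw i) v
          fun i _ => ℓ.le_opNorm_of_le (hK i)
    _ ≤ (1 - ∑ i, v i * q i) * (‖ℓ‖ * K) + ‖ℓ‖ * (2 * εnys + εLP) := by gcongr
    _ = ((1 - ∑ i, v i * q i) * K + 2 * εnys + εLP) * ‖ℓ‖ := by ring

/-- Guarantee of the constrained linear-programming quadrature under random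
thinning.  `Φ` is a feature map, `P` the orthogonal projection onto a finite-dimensional
subspace `V` (Nyström approximation), `Z i` independent Bernoulli feasibility variables with
probabilities `q i`, `Kmax = max_i ‖Φ(x_i)‖`, `εnys = max_i ‖Φ(x_i) − PΦ(x_i)‖`,
`εvio = 1 − ∑ i, wN i * q i`.  If the LP solution `w*` has at least the expected feasibility
of `wN` and its projected embedding difference from `wN` is at most `εLP`, then for every
`g ∈ H` the RKHS function `f = ⟪g, Φ(·)⟫` satisfies
`E[ |∑ i, Z_i w*_i f(x_i) − ∑ i, wN_i f(x_i)| ] ≤ (εvio Kmax + 2 εnys + εLP) ‖g‖`. -/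
theorem stmt_2
    {H : Type*} [NormedAddCommGroup H] [InnerProductSpace ℝ H]
    {X : Type*} (Φ : X → H)
    (V : Submodule ℝ H) [FiniteDimensional ℝ V]
    {N : ℕ} (x : Fin N → X)
    (wN wstar : Fin N → ℝ)
    (hwN : ∀ i, 0 ≤ wN i) (hwN1 : ∑ i, wN i = 1)
    (hwstar : ∀ i, 0 ≤ wstar i) (hwstar1 : ∑ i, wstar i = 1)
    (q : Fin N → ℝ) (hq : ∀ i, q i ∈ Set.Icc (0 : ℝ) 1)
    {Ω : Type*} [MeasurableSpace Ω] (μ : Measure Ω) [IsProbabilityMeasure μ]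
    (Z : Fin N → Ω → ℝ)
    (hZmeas : ∀ i, Measurable (Z i))
    (hZ01 : ∀ i ω, Z i ω = 0 ∨ Z i ω = 1)
    (hZq : ∀ i, μ {ω | Z i ω = 1} = ENNReal.ofReal (q i))
    (hZindep : iIndepFun Z μ)
    (Kmax εnys εvio εLP : ℝ) (hεLP : 0 ≤ εLP)
    (hKmax : IsGreatest (Set.range fun i => ‖Φ (x i)‖) Kmax)
    (hεnys : IsGreatest
      (Set.range fun i => ‖Φ (x i) - (Submodule.orthogonalProjectionOnto V (Φ (x i)) : H)‖) εnys)
    (hεvio : εvio = 1 - ∑ i, wN i * q i)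
    (hfeas : ∑ i, wN i * q i ≤ ∑ i, wstar i * q i)
    (hLP : ‖∑ i, (wstar i - wN i) • (Submodule.orthogonalProjectionOnto V (Φ (x i)) : H)‖ ≤ εLP) :
    ∀ g : H,
      (∫ ω, |(∑ i, Z i ω * wstar i * ⟪g, Φ (x i)⟫) - ∑ i, wN i * ⟪g, Φ (x i)⟫| ∂μ)
        ≤ (εvio * Kmax + 2 * εnys + εLP) * ‖g‖ := by
  intro g
  have hZint (i) : Integrable (Z i) μ :=
    integrable_of_eq_zero_or_one (hZmeas i).aemeasurable (ae_of_all μ (hZ01 i))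
  have hZ1 (i) : ∀ᵐ ω ∂μ, Z i ω ≤ 1 :=
    ae_of_all μ fun ω => (hZ01 i ω).elim (fun h => h.trans_le zero_le_one) le_of_eq
  have hZmean (i) : ∫ ω, Z i ω ∂μ = q i := by
    rw [integral_eq_measureReal_of_eq_zero_or_one (hZmeas i).aemeasurable (ae_of_all μ (hZ01 i)),
      measureReal_def, hZq i, ENNReal.toReal_ofReal (hq i).1]
  have hbound := stmt_2_general hwN hwN1 hwstar hwstar1 hZint hZ1 hZmean hfeas
    (fun i => hKmax.2 ⟨i, rfl⟩) (fun i => hεnys.2 ⟨i, rfl⟩) hLP (innerSL ℝ g)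
  simpa only [hεvio, innerSL_apply_apply, innerSL_apply_norm, smul_eq_mul, Real.norm_eq_abs]
    using hbound
end
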